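/- The function φ₁(x) = ∫₀^∞ η(t) e^{-κ(b-x)t} dt satisfies the ordinary differential equation ρ φ₁(x) - a(b - x) φ₁'(x) - (σ²/2) φ₁''(x) = 0 for all x ∈ ℝ. -/

import Mathlib

open MeasureTheory Real Set

lemma G_bound (s c t : ℝ) (ht : 0 < t) :
    t ^ s * exp (-t ^ 2 / 2) * exp (c * t) ≤ exp (c ^ 2) * (t ^ s * exp (-(1/4) * t ^ 2)) := by
  have h : exp (-t ^ 2 / 2) * exp (c * t) ≤ exp (c ^ 2) * exp (-(1/4) * t ^ 2) := by
    rw [← exp_add, ← exp_add]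
    apply exp_le_exp.2
    nlinarith [sq_nonneg (t / 2 - c)]
  have := mul_le_mul_of_nonneg_left h (rpow_nonneg ht.le s)
  linarith

lemma G_meas (s c : ℝ) : Measurable (fun t : ℝ => t ^ s * exp (-t ^ 2 / 2) * exp (c * t)) := by
  fun_prop

lemma G_int (s c : ℝ) (hs : -1 < s) :
    IntegrableOn (fun t : ℝ => t ^ s * exp (-t ^ 2 / 2) * exp (c * t)) (Ioi 0) := by
  refine Integrable.mono' ((integrableOn_rpow_mul_exp_neg_mul_sq (b := 1/4) (by norm_num) hs).const_mul
    (exp (c ^ 2))) (G_meas s c).aestronglyMeasurable ?_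
  filter_upwards [ae_restrict_mem measurableSet_Ioi] with t ht
  have ht : 0 < t := ht
  rw [norm_of_nonneg (by positivity)]
  exact G_bound s c t ht

lemma G_deriv (s c : ℝ) (hs : -1 < s) :
    HasDerivAt (fun c : ℝ => ∫ t in Ioi (0 : ℝ), t ^ s * exp (-t ^ 2 / 2) * exp (c * t))
      (∫ t in Ioi (0 : ℝ), t ^ (s + 1) * exp (-t ^ 2 / 2) * exp (c * t)) c := by
  refine (hasDerivAt_integral_of_dominated_loc_of_deriv_le (s := Iio (c + 1))
    (F' := fun c t => t ^ (s + 1) * exp (-t ^ 2 / 2) * exp (c * t))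
    (bound := fun t => t ^ (s + 1) * exp (-t ^ 2 / 2) * exp ((c + 1) * t))
    (Iio_mem_nhds (by linarith)) (Filter.Eventually.of_forall fun x =>
      (G_meas s x).aestronglyMeasurable) (G_int s c hs) (G_meas (s+1) c).aestronglyMeasurable
      ?_ (G_int (s+1) (c+1) (by linarith)) ?_).2
  · filter_upwards [ae_restrict_mem measurableSet_Ioi] with t ht x hx
    have ht : 0 < t := ht
    have hx : x < c + 1 := hx
    rw [norm_of_nonneg (by positivity)]
    gcongr
  · filter_upwards [ae_restrict_mem measurableSet_Ioi] with t ht x hx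
    have ht : 0 < t := ht
    have h := (((hasDerivAt_id x).mul_const t).exp).const_mul (t ^ s * exp (-t ^ 2 / 2))
    refine h.congr_deriv ?_
    rw [rpow_add_one ht.ne']
    simp only [id]
    ring

lemma G_rec (s c : ℝ) (hs : -1 < s) :
    (s + 1) * (∫ t in Ioi (0 : ℝ), t ^ s * exp (-t ^ 2 / 2) * exp (c * t))
      + c * (∫ t in Ioi (0 : ℝ), t ^ (s + 1) * exp (-t ^ 2 / 2) * exp (c * t))
      - (∫ t in Ioi (0 : ℝ), t ^ (s + 1 + 1) * exp (-t ^ 2 / 2) * exp (c * t)) = 0 := by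
  have i0 := (G_int s c hs).const_mul (s + 1)
  have i1 := (G_int (s+1) c (by linarith)).const_mul c
  have i2 := G_int (s+1+1) c (by linarith)
  have i01 : Integrable (fun t : ℝ => (s + 1) * (t ^ s * exp (-t ^ 2 / 2) * exp (c * t))
      + c * (t ^ (s + 1) * exp (-t ^ 2 / 2) * exp (c * t))) (volume.restrict (Ioi 0)) := i0.add i1
  rw [← integral_const_mul, ← integral_const_mul, ← integral_add i0 i1, ← integral_sub i01 i2]
  have hd : ∀ t ∈ Ioi (0:ℝ), HasDerivAt
      (fun t : ℝ => t ^ (s + 1) * exp (-t ^ 2 / 2) * exp (c * t))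
      ((s + 1) * (t ^ s * exp (-t ^ 2 / 2) * exp (c * t))
        + c * (t ^ (s + 1) * exp (-t ^ 2 / 2) * exp (c * t))
        - t ^ (s + 1 + 1) * exp (-t ^ 2 / 2) * exp (c * t)) t := by
    intro t ht
    have ht : 0 < t := ht
    have h1 := hasDerivAt_rpow_const (x := t) (p := s + 1) (Or.inl ht.ne')
    have h2 : HasDerivAt (fun t : ℝ => exp (-t ^ 2 / 2)) (exp (-t ^ 2 / 2) * (-t)) t := by
      have := (((hasDerivAt_pow 2 t).neg).div_const 2).exp
      refine this.congr_deriv ?_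
      simp
      ring
    have h3 : HasDerivAt (fun t : ℝ => exp (c * t)) (exp (c * t) * c) t := by
      have := ((hasDerivAt_id t).const_mul c).exp
      simpa using this
    refine ((h1.mul h2).mul h3).congr_deriv ?_
    simp only [Pi.mul_apply]
    rw [rpow_add_one ht.ne' (s+1), add_sub_cancel_right]
    ring
  have hi := i01.sub i2
  have := integral_Ioi_of_hasDerivAt_of_tendsto (a := 0) (m := 0) ?_ hd hi
    (tendsto_zero_of_hasDerivAt_of_integrableOn_Ioi hd hi (G_int (s+1) c (by linarith)))
  · rw [zero_rpow (by linarith)] at this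
    simpa using this
  · apply ContinuousAt.continuousWithinAt
    have : ContinuousAt (fun t : ℝ => t ^ (s+1)) 0 :=
      continuousAt_rpow_const _ _ (Or.inr (by linarith))
    exact (this.mul (by fun_prop)).mul (by fun_prop)

theorem stmt_3 (a ρ σ b : ℝ) (ha : 0 < a) (hρ : 0 < ρ) (hσ : 0 < σ)
    (κ : ℝ) (hκ : κ = Real.sqrt (2 * a) / σ)
    (η : ℝ → ℝ) (hη : ∀ t, η t = t ^ (ρ / a - 1) * Real.exp (-t ^ 2 / 2))
    (φ₁ : ℝ → ℝ)
    (hφ₁ : ∀ x, φ₁ x = ∫ t in Ioi (0 : ℝ), η t * Real.exp (-(κ * (b - x)) * t)) :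
    ∀ x : ℝ,
      ρ * φ₁ x - a * (b - x) * deriv φ₁ x - σ ^ 2 / 2 * deriv (deriv φ₁) x = 0 := by
  intro x
  obtain ⟨s, hs⟩ : ∃ s, s = ρ / a - 1 := ⟨_, rfl⟩
  have hs1 : -1 < s := by
    have : 0 < ρ / a := by positivity
    linarith
  have hρs : ρ = a * (s + 1) := by rw [hs]; field_simp; ring
  have hκ2 : σ ^ 2 * κ ^ 2 = 2 * a := by
    rw [hκ, div_pow, sq_sqrt (by positivity)]
    field_simp
  simp only [hη, ← hs] at hφ₁
  have hc : ∀ x, HasDerivAt (fun x => -(κ * (b - x))) κ x := by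
    intro x
    have := (((hasDerivAt_id x).const_sub b).const_mul κ).neg
    exact this.congr_deriv (by ring)
  have hd1 : deriv φ₁ = fun x => (∫ t in Ioi (0 : ℝ),
      t ^ (s + 1) * exp (-t ^ 2 / 2) * exp (-(κ * (b - x)) * t)) * κ := by
    funext x
    rw [funext hφ₁]
    exact ((G_deriv s _ hs1).comp x (hc x)).deriv
  have hd2 : deriv (deriv φ₁) x = (∫ t in Ioi (0 : ℝ),
      t ^ (s + 1 + 1) * exp (-t ^ 2 / 2) * exp (-(κ * (b - x)) * t)) * κ * κ := by
    rw [hd1]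
    exact (((G_deriv (s+1) _ (by linarith)).comp x (hc x)).mul_const κ).deriv
  have hr := G_rec s (-(κ * (b - x))) hs1
  rw [hd2, hd1, hφ₁]
  generalize (∫ t in Ioi (0 : ℝ), t ^ s * exp (-t ^ 2 / 2) * exp (-(κ * (b - x)) * t)) = A at *
  generalize hB : (∫ t in Ioi (0 : ℝ), t ^ (s+1) * exp (-t ^ 2 / 2) * exp (-(κ * (b - x)) * t)) = B at *
  generalize (∫ t in Ioi (0 : ℝ), t ^ (s+1+1) * exp (-t ^ 2 / 2) * exp (-(κ * (b - x)) * t)) = C at *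
  simp only [hB]
  rw [hρs]
  linear_combination a * hr - C / 2 * hκ2
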